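/- In the Golub–Kahan bidiagonalization setup, for every k with 1 ≤ k ≤ n−1 there exists m_k with 0 < m_k < 1 such that (γ_k^{lsqr})² < ‖AᵀA − Q_{k+1}Q_{k+1}ᵀ(AᵀA)Q_kQ_kᵀ‖ ≤ √(1 + m_k (γ_{k−1}^{lsqr}/γ_k^{lsqr})²) · (γ_k^{lsqr})². -/

import Mathlib

open Matrix

/-- Spectral norm (largest singular value) of a real matrix. -/
noncomputable def specNorm {a b : ℕ} (M : Matrix (Fin a) (Fin b) ℝ) : ℝ :=
  ‖LinearMap.toContinuousLinearMap (Matrix.toEuclideanLin M)‖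

/-- The `j`-th largest singular value of a real matrix (`j ≥ 1`), characterized via the
Eckart–Young theorem as the minimal spectral-norm distance to matrices of rank `< j`;
it is `0` when `j` exceeds the smaller dimension. -/
noncomputable def singVal {a b : ℕ} (M : Matrix (Fin a) (Fin b) ℝ) (j : ℕ) : ℝ :=
  sInf {r : ℝ | ∃ D : Matrix (Fin a) (Fin b) ℝ, D.rank < j ∧ r = specNorm (M - D)}

/-- The matrix of the first `k` columns of `M`. -/
def colSub {a b : ℕ} (M : Matrix (Fin a) (Fin b) ℝ) (k : ℕ) (hk : k ≤ b) :
    Matrix (Fin a) (Fin k) ℝ :=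
  M.submatrix id fun j => ⟨j.1, lt_of_lt_of_le j.2 hk⟩

/-- The leading `r × c` submatrix of `M`. -/
def subUL {a b : ℕ} (M : Matrix (Fin a) (Fin b) ℝ) (r c : ℕ) (hr : r ≤ a) (hc : c ≤ b) :
    Matrix (Fin r) (Fin c) ℝ :=
  M.submatrix (fun i => ⟨i.1, lt_of_lt_of_le i.2 hr⟩) (fun j => ⟨j.1, lt_of_lt_of_le j.2 hc⟩)

/-!
Put `T = (A Q)ᵀ (A Q) = Bᵀ B`, an unreduced tridiagonal matrix, and let `p_k` be the orthogonal
projection onto the coordinates after the first `k`. Then `γ_k = ‖A Q p_k‖`, so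
`γ_k² = ‖p_k T p_k‖`, and the approximation error is `‖T p_k‖`. The matrix `T p_k` extends
`p_k T p_k` by the single entry `t = α_{k+1} β_{k+1}` at position `(k, k + 1)`. Hence
`‖T p_k‖² ≤ γ_k⁴ + t²`, which is the upper bound with `m_k = (t / (γ_{k-1} γ_k))²`; and
`|t| < γ_{k-1} γ_k` because `t` is the inner product of two consecutive columns of `A Q`, the
second of norm at most `γ_k`, the first of norm less than `γ_{k-1}` as it is not orthogonal to the
second. If `‖T p_k‖ = ‖p_k T p_k‖`, an extremal eigenvector of `p_k T p_k` would be an eigenvector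
of `T` with vanishing first coordinate, and an unreduced tridiagonal matrix has none.
-/

section StarProjection

theorem norm_sq_le_of_isStarProjection {E : Type*} [NormedRing E] [StarRing E] [CStarRing E] {p : E}
    (hp : IsStarProjection p) (x : E) : ‖x‖ ^ 2 ≤ ‖p * x‖ ^ 2 + ‖(1 - p) * x‖ ^ 2 := by
  have star_mul_mul {q : E} (hq : IsStarProjection q) :
      star (q * x) * (q * x) = star x * (q * x) := by
    rw [star_mul, hq.isSelfAdjoint.star_eq, mul_assoc, ← mul_assoc q, hq.isIdempotentElem.eq]
  have decomp : star x * x =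
      star (p * x) * (p * x) + star ((1 - p) * x) * ((1 - p) * x) := by
    rw [star_mul_mul hp, star_mul_mul hp.one_sub]
    noncomm_ring
  simpa only [pow_two, ← CStarRing.norm_star_mul_self, decomp] using norm_add_le _ _

theorem apply_eq_smul_of_compression_apply_eq_smul {𝕜 E : Type*} [RCLike 𝕜] [NormedAddCommGroup E]
    [InnerProductSpace 𝕜 E] [CompleteSpace E] {T p : E →L[𝕜] E} (hp : IsStarProjection p)
    {c : 𝕜} (hc : c ≠ 0) (hle : ‖T * p‖ ≤ ‖c‖) {v : E} (hv : (p * T * p) v = c • v) :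
    p v = v ∧ T v = c • v := by
  have hpv : p v = v := by
    have h : c • p v = c • v := by
      rw [← map_smul, ← hv]
      simp only [← mul_apply_eq_comp, ← mul_assoc, hp.isIdempotentElem.eq]
    exact smul_right_injective E hc h
  have hpTv : p (T v) = c • v := by simpa [hpv] using hv
  have norm_Tv_le : ‖T v‖ ≤ ‖p (T v)‖ := by
    calc ‖T v‖ = ‖(T * p) v‖ := by simp [hpv]
      _ ≤ ‖c‖ * ‖v‖ := (T * p).le_of_opNorm_le hle v
      _ = ‖p (T v)‖ := by rw [hpTv, norm_smul]
  obtain ⟨K, _, rfl⟩ := isStarProjection_iff_eq_starProjection.mp hp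
  have mem : T v ∈ K := (K.mem_iff_norm_starProjection _).mpr
    (le_antisymm (K.norm_starProjection_apply_le _) norm_Tv_le)
  exact ⟨hpv, by rw [← hpTv, K.starProjection_eq_self_iff.mpr mem]⟩

end StarProjection

open scoped Matrix.Norms.L2Operator

section SpectralNorm

variable {𝕜 l m n : Type*} [RCLike 𝕜] [Fintype m]

theorem inner_col_col (M : Matrix m n 𝕜) (i j : n) :
    inner 𝕜 (WithLp.toLp 2 (M.col i)) (WithLp.toLp 2 (M.col j)) = (Mᴴ * M) i j := by
  simp [EuclideanSpace.inner_toLp_toLp, Matrix.mul_apply, dotProduct, mul_comm]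

variable [Fintype l] [Fintype n] [DecidableEq n]

theorem exists_abs_eigenvalues_eq_l2_opNorm [Nonempty n] {A : Matrix n n 𝕜} (hA : A.IsHermitian) :
    ∃ i, |hA.eigenvalues i| = ‖A‖ := by
  have norm_eq : ‖A‖ = ‖(RCLike.ofReal ∘ hA.eigenvalues : n → 𝕜)‖ := by
    conv_lhs => rw [hA.spectral_theorem, Unitary.conjStarAlgAut_apply, ← Unitary.coe_star,
      CStarRing.norm_mul_coe_unitary, CStarRing.norm_coe_unitary_mul, l2_opNorm_diagonal]
  obtain ⟨i, hi⟩ := Finite.exists_max fun i => |hA.eigenvalues i|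
  refine ⟨i, norm_eq ▸ le_antisymm ?_ ((pi_norm_le_iff_of_nonneg (abs_nonneg _)).mpr fun j => ?_)⟩
  · simpa using norm_le_pi_norm (RCLike.ofReal ∘ hA.eigenvalues : n → 𝕜) i
  · simpa using hi j

theorem l2_opNorm_mul_of_conjTranspose_mul_self_eq_one [DecidableEq l] {V : Matrix m n 𝕜}
    (hV : Vᴴ * V = 1) (M : Matrix n l 𝕜) : ‖V * M‖ = ‖M‖ := by
  rw [← mul_self_inj (norm_nonneg _) (norm_nonneg _), ← l2_opNorm_conjTranspose_mul_self,
    ← l2_opNorm_conjTranspose_mul_self, conjTranspose_mul, Matrix.mul_assoc,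
    ← Matrix.mul_assoc Vᴴ, hV, Matrix.one_mul]

theorem l2_opNorm_mul_conjTranspose_of_conjTranspose_mul_self_eq_one [DecidableEq l]
    {V : Matrix l n 𝕜} (hV : Vᴴ * V = 1) (M : Matrix m n 𝕜) : ‖M * Vᴴ‖ = ‖M‖ := by
  classical
  rw [← l2_opNorm_conjTranspose, conjTranspose_mul, conjTranspose_conjTranspose,
    l2_opNorm_mul_of_conjTranspose_mul_self_eq_one hV, l2_opNorm_conjTranspose]

theorem norm_col_le_l2_opNorm (M : Matrix m n 𝕜) (j : n) : ‖WithLp.toLp 2 (M.col j)‖ ≤ ‖M‖ := by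
  simpa using M.l2_opNorm_mulVec (EuclideanSpace.single j 1)

theorem l2_opNorm_single [DecidableEq m] (i : m) (j : n) (a : 𝕜) : ‖single i j a‖ = ‖a‖ := by
  rw [← mul_self_inj (norm_nonneg _) (norm_nonneg _), ← l2_opNorm_conjTranspose_mul_self]
  simp [← Matrix.diagonal_single, Pi.norm_single]

theorem norm_col_lt_l2_opNorm {M : Matrix m n 𝕜} {i j : n} (hij : i ≠ j)
    (h : (Mᴴ * M) i j ≠ 0) : ‖WithLp.toLp 2 (M.col i)‖ < ‖M‖ := by
  classical
  set x := WithLp.toLp 2 (M.col i) with hx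
  set y := WithLp.toLp 2 ((Mᴴ * M).col i) with hy
  have norm_y_le : ‖y‖ ≤ ‖M‖ * ‖x‖ := by
    have hyx : (Mᴴ * M).col i = Mᴴ *ᵥ M.col i := by simp only [← mulVec_single_one, mulVec_mulVec]
    rw [hy, hyx, ← l2_opNorm_conjTranspose]
    exact Mᴴ.l2_opNorm_mulVec x
  have norm_y_i : ‖y i‖ = ‖x‖ ^ 2 := by
    simp [hy, ← inner_col_col, hx, inner_self_eq_norm_sq_to_K]
  have norm_y_j_pos : 0 < ‖y j‖ := by
    rw [norm_pos_iff]
    simpa [hy, ← inner_col_col, inner_eq_zero_symm] using h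
  have lt_norm_y : ‖x‖ ^ 2 < ‖y‖ := by
    refine lt_of_pow_lt_pow_left₀ 2 (norm_nonneg _) ?_
    calc (‖x‖ ^ 2) ^ 2 < ‖y i‖ ^ 2 + ‖y j‖ ^ 2 := by
          rw [norm_y_i]; exact lt_add_of_pos_right _ (pow_pos norm_y_j_pos 2)
      _ = ∑ l ∈ {i, j}, ‖y l‖ ^ 2 := by rw [Finset.sum_pair hij]
      _ ≤ ∑ l, ‖y l‖ ^ 2 := Finset.sum_le_univ_sum_of_nonneg fun _ => sq_nonneg _
      _ = ‖y‖ ^ 2 := (EuclideanSpace.norm_sq_eq y).symm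
  exact lt_of_mul_lt_mul_right ((pow_two ‖x‖ ▸ lt_norm_y).trans_le norm_y_le) (norm_nonneg x)

theorem norm_conjTranspose_mul_self_apply_lt {M : Matrix m n 𝕜} {i j : n} (hij : i ≠ j)
    (h : (Mᴴ * M) i j ≠ 0) :
    ‖(Mᴴ * M) i j‖ < ‖M‖ * ‖WithLp.toLp 2 (M.col j)‖ := by
  have col_j_ne_zero : WithLp.toLp 2 (M.col j) ≠ 0 := fun h0 => h (by
    rw [← inner_col_col, h0, inner_zero_right])
  calc ‖(Mᴴ * M) i j‖ ≤ ‖WithLp.toLp 2 (M.col i)‖ * ‖WithLp.toLp 2 (M.col j)‖ := by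
        rw [← inner_col_col]; exact norm_inner_le_norm _ _
    _ < ‖M‖ * ‖WithLp.toLp 2 (M.col j)‖ :=
      mul_lt_mul_of_pos_right (norm_col_lt_l2_opNorm hij h) (norm_pos_iff.mpr col_j_ne_zero)

end SpectralNorm

section TailProj

variable {R m : Type*} {n : ℕ}

variable (R n) in
/-- The coordinate projection onto the span of the standard basis vectors with index (counted
from `0`) at least `k`; for orthogonal `Q`, the paper's `1 - Q_k Q_kᵀ` is
`Q * tailProj R n k * Qᵀ`. -/
def tailProj [Zero R] [One R] (k : ℕ) : Matrix (Fin n) (Fin n) R :=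
  diagonal fun i => if k ≤ (i : ℕ) then 1 else 0

theorem isStarProjection_tailProj [Semiring R] [StarRing R] (k : ℕ) :
    IsStarProjection (tailProj R n k) where
  isIdempotentElem := by
    rw [IsIdempotentElem, tailProj, diagonal_mul_diagonal]
    simp only [ite_mul_ite, mul_one, mul_zero]
  isSelfAdjoint := by
    rw [tailProj, ← isHermitian_iff_isSelfAdjoint, isHermitian_diagonal_iff]
    intro i
    split_ifs <;> simp

theorem mul_tailProj_apply [Semiring R] (M : Matrix m (Fin n) R) (k : ℕ) (i : m) (j : Fin n) :
    (M * tailProj R n k) i j = if k ≤ (j : ℕ) then M i j else 0 := by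
  simp only [tailProj, mul_diagonal, mul_ite, mul_one, mul_zero]

theorem one_sub_tailProj_mul_apply [Ring R] (M : Matrix (Fin n) m R) (k : ℕ) (i : Fin n) (j : m) :
    ((1 - tailProj R n k) * M : Matrix (Fin n) m R) i j = if (i : ℕ) < k then M i j else 0 := by
  rw [Matrix.sub_mul, Matrix.one_mul, Matrix.sub_apply, tailProj, diagonal_mul]
  split_ifs <;> first | omega | simp

theorem apply_eq_zero_of_tailProj_mulVec_eq_self [Semiring R] {k : ℕ} {v : Fin n → R}
    (hv : tailProj R n k *ᵥ v = v) {i : Fin n} (hi : (i : ℕ) < k) : v i = 0 := by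
  rw [← hv, tailProj, mulVec_diagonal, if_neg (not_le.mpr hi), zero_mul]

theorem colSub_mul_transpose (Q : Matrix (Fin n) (Fin n) ℝ) (k : ℕ) (hk : k ≤ n) :
    colSub Q k hk * (colSub Q k hk)ᵀ = Q * (1 - tailProj ℝ n k) * Qᵀ := by
  ext i j
  rw [Matrix.mul_assoc, Matrix.mul_apply, Matrix.mul_apply]
  simp only [one_sub_tailProj_mul_apply, mul_ite, mul_zero]
  rw [← Finset.sum_filter]
  exact Finset.sum_bij (fun a _ => a.castLE hk) (by simp)
    (fun a _ b _ h => Fin.castLE_injective hk h)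
    (fun b hb => ⟨⟨b, by simpa using hb⟩, Finset.mem_univ _, rfl⟩) (fun a _ => rfl)

end TailProj

section Hessenberg

variable {R : Type*} {n : ℕ}

/-- Lower Hessenberg matrices; a Hermitian one is tridiagonal. -/
def IsLowerHessenberg [Zero R] (T : Matrix (Fin n) (Fin n) R) : Prop :=
  ∀ ⦃i j : Fin n⦄, (i : ℕ) + 1 < j → T i j = 0

/-- Lower Hessenberg matrices with no zero on the superdiagonal; a Hermitian one is an unreduced
tridiagonal (Jacobi) matrix. -/
structure IsUnreducedLowerHessenberg [Zero R] (T : Matrix (Fin n) (Fin n) R) : Prop where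
  isLowerHessenberg : IsLowerHessenberg T
  superdiag_ne_zero : ∀ ⦃i j : Fin n⦄, (i : ℕ) + 1 = j → T i j ≠ 0

-- Row `j - 1` of `T *ᵥ v = c • v` determines `v j` from the earlier coordinates.
theorem IsUnreducedLowerHessenberg.eq_zero_of_mulVec_eq_smul [Semiring R] [NoZeroDivisors R]
    {T : Matrix (Fin n) (Fin n) R} (hT : IsUnreducedLowerHessenberg T) {v : Fin n → R} {c : R}
    (hv : T *ᵥ v = c • v) (hv_zero : ∀ i : Fin n, (i : ℕ) = 0 → v i = 0) : v = 0 := by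
  ext j
  induction j using WellFoundedLT.induction with
  | ind j ih =>
    rcases Nat.eq_zero_or_pos (j : ℕ) with hj | hj
    · exact hv_zero j hj
    · let i : Fin n := ⟨j - 1, by omega⟩
      have hij : (i : ℕ) + 1 = j := Nat.sub_add_cancel hj
      have row_i : (T *ᵥ v) i = T i j * v j := by
        refine Finset.sum_eq_single j (fun l _ hlj => ?_) fun h => absurd (Finset.mem_univ j) h
        rcases lt_or_gt_of_ne hlj with hlt | hgt
        · rw [ih l hlt, Pi.zero_apply, mul_zero]
        · exact mul_eq_zero_of_left (hT.isLowerHessenberg (hij.trans_lt hgt)) _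
      rw [hv, Pi.smul_apply, ih i (Fin.lt_def.mpr (by omega)), Pi.zero_apply, smul_zero] at row_i
      exact (mul_eq_zero.mp row_i.symm).resolve_left (hT.superdiag_ne_zero hij)

theorem IsLowerHessenberg.one_sub_tailProj_mul_mul_tailProj [Ring R] {T : Matrix (Fin n) (Fin n) R}
    (hT : IsLowerHessenberg T) {i j : Fin n} (hij : (i : ℕ) + 1 = j) :
    (1 - tailProj R n j) * (T * tailProj R n j) = single i j (T i j) := by
  ext r s
  rw [one_sub_tailProj_mul_apply, mul_tailProj_apply, single_apply]
  split_ifs with hr hs hrs hrs hrs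
  · rw [hrs.1, hrs.2]
  · exact hT (by omega)
  all_goals first | rfl | omega

theorem IsLowerHessenberg.one_sub_tailProj_mul_mul_tailProj_succ [Ring R]
    {T : Matrix (Fin n) (Fin n) R} (hT : IsLowerHessenberg T) (k : ℕ) :
    (1 - tailProj R n k) * (T * tailProj R n (k + 1)) = 0 := by
  ext r s
  rw [one_sub_tailProj_mul_apply, mul_tailProj_apply]
  split_ifs with hr hs
  · exact hT (by omega)
  all_goals rfl

/-- The `(n + 1) × n` lower bidiagonal matrix with diagonal `α` and subdiagonal `β`; the paper's
`β_{j+1}`, in column `j`, is `β j` here. -/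
def lowerBidiagonal [Zero R] (α β : Fin n → R) : Matrix (Fin (n + 1)) (Fin n) R :=
  of fun i j => if (i : ℕ) = j then α j else if (i : ℕ) = j + 1 then β j else 0

theorem isUnreducedLowerHessenberg_gram_lowerBidiagonal [Semiring R] [NoZeroDivisors R]
    {α β : Fin n → R} (hα : ∀ i, α i ≠ 0) (hβ : ∀ i, β i ≠ 0) :
    IsUnreducedLowerHessenberg ((lowerBidiagonal α β)ᵀ * lowerBidiagonal α β) where
  isLowerHessenberg i j hij := by
    rw [Matrix.mul_apply]
    refine Finset.sum_eq_zero fun l _ => ?_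
    simp only [transpose_apply, lowerBidiagonal, of_apply]
    split_ifs <;> first | omega | simp
  superdiag_ne_zero i j hij := by
    have gram_apply : ((lowerBidiagonal α β)ᵀ * lowerBidiagonal α β) i j = β i * α j := by
      rw [Matrix.mul_apply, Finset.sum_eq_single j.castSucc]
      · simp [lowerBidiagonal, ← hij]
      · intro l _ hl
        have hlj : (l : ℕ) ≠ j := fun h => hl (Fin.ext h)
        simp only [transpose_apply, lowerBidiagonal, of_apply]
        split_ifs <;> first | omega | simp
      · exact fun h => absurd (Finset.mem_univ _) h
    rw [gram_apply]
    exact mul_ne_zero (hβ i) (hα j)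

end Hessenberg

section TailBounds

variable {𝕜 ι : Type*} [RCLike 𝕜] [Fintype ι] {n : ℕ}

theorem exists_mulVec_eq_smul_of_l2_opNorm_le [DecidableEq ι] {T p : Matrix ι ι 𝕜}
    (hT : T.IsHermitian) (hp : IsStarProjection p) (hTp : T * p ≠ 0)
    (hle : ‖T * p‖ ≤ ‖p * T * p‖) : ∃ (v : ι → 𝕜) (c : 𝕜), v ≠ 0 ∧ p *ᵥ v = v ∧ T *ᵥ v = c • v := by
  have hermitian : (p * T * p).IsHermitian := by
    simpa [hp.isSelfAdjoint.isHermitian.eq] using isHermitian_conjTranspose_mul_mul p hT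
  have : Nonempty ι := not_isEmpty_iff.mp fun _ => hTp (Subsingleton.elim _ _)
  obtain ⟨l, hl⟩ := exists_abs_eigenvalues_eq_l2_opNorm hermitian
  have norm_c : ‖(hermitian.eigenvalues l : 𝕜)‖ = ‖p * T * p‖ := by rw [RCLike.norm_ofReal, hl]
  have eigen := hermitian.mulVec_eigenvectorBasis l
  have v_ne_zero := hermitian.eigenvectorBasis.orthonormal.ne_zero l
  set c : 𝕜 := (hermitian.eigenvalues l : 𝕜)
  set v := hermitian.eigenvectorBasis l
  have c_ne_zero : c ≠ 0 := norm_pos_iff.mp (norm_c ▸ (norm_pos_iff.mpr hTp).trans_le hle)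
  let Φ := toEuclideanCLM (n := ι) (𝕜 := 𝕜)
  have hv : (Φ p * Φ T * Φ p) v = c • v := by
    rw [← map_mul, ← map_mul]
    exact congrArg (WithLp.toLp 2) (eigen.trans (RCLike.real_smul_eq_coe_smul _ _))
  obtain ⟨hpv, hTv⟩ := apply_eq_smul_of_compression_apply_eq_smul (hp.map Φ) c_ne_zero
    (T := Φ T) (by rw [← map_mul, norm_c]; exact hle) hv
  exact ⟨v.ofLp, c, (WithLp.ofLp_eq_zero 2).not.mpr v_ne_zero,
    congrArg WithLp.ofLp hpv, congrArg WithLp.ofLp hTv⟩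

theorem l2_opNorm_compression_lt {T : Matrix (Fin n) (Fin n) 𝕜} (hT : T.IsHermitian)
    (hT_unreduced : IsUnreducedLowerHessenberg T) {i j : Fin n} (hij : (i : ℕ) + 1 = j) :
    ‖tailProj 𝕜 n j * T * tailProj 𝕜 n j‖ < ‖T * tailProj 𝕜 n j‖ := by
  by_contra! hle
  have hTp : T * tailProj 𝕜 n j ≠ 0 := fun h => hT_unreduced.superdiag_ne_zero hij <| by
    simpa [mul_tailProj_apply] using congr_fun₂ h i j
  obtain ⟨v, c, hv, hpv, hTv⟩ :=
    exists_mulVec_eq_smul_of_l2_opNorm_le hT (isStarProjection_tailProj j) hTp hle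
  exact hv <| hT_unreduced.eq_zero_of_mulVec_eq_smul hTv fun l hl =>
    apply_eq_zero_of_tailProj_mulVec_eq_self hpv (by omega)

theorem tailProj_mul_gram_mul_tailProj (F : Matrix ι (Fin n) 𝕜) (k : ℕ) :
    tailProj 𝕜 n k * (Fᴴ * F) * tailProj 𝕜 n k = (F * tailProj 𝕜 n k)ᴴ * (F * tailProj 𝕜 n k) := by
  rw [conjTranspose_mul, (isStarProjection_tailProj k).isSelfAdjoint.isHermitian.eq]
  simp only [Matrix.mul_assoc]

theorem norm_gram_apply_lt {F : Matrix ι (Fin n) 𝕜} {i j : Fin n} (hij : i < j)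
    (h : (Fᴴ * F) i j ≠ 0) :
    ‖(Fᴴ * F) i j‖ < ‖F * tailProj 𝕜 n i‖ * ‖F * tailProj 𝕜 n j‖ := by
  have col_tail {k : ℕ} {l : Fin n} (hkl : k ≤ l) : (F * tailProj 𝕜 n k).col l = F.col l := by
    ext r
    rw [col_apply, mul_tailProj_apply, if_pos hkl, col_apply]
  have gram_tail : ((F * tailProj 𝕜 n i)ᴴ * (F * tailProj 𝕜 n i)) i j = (Fᴴ * F) i j := by
    rw [← inner_col_col, ← inner_col_col, col_tail le_rfl, col_tail hij.le]
  calc ‖(Fᴴ * F) i j‖ < ‖F * tailProj 𝕜 n i‖ * ‖WithLp.toLp 2 ((F * tailProj 𝕜 n i).col j)‖ :=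
        gram_tail ▸ norm_conjTranspose_mul_self_apply_lt hij.ne (gram_tail ▸ h)
    _ ≤ ‖F * tailProj 𝕜 n i‖ * ‖F * tailProj 𝕜 n j‖ := by
        rw [col_tail hij.le, ← col_tail le_rfl]
        gcongr
        exact norm_col_le_l2_opNorm _ _

theorem sq_l2_opNorm_gram_mul_tailProj_le {F : Matrix ι (Fin n) 𝕜}
    (hT : IsLowerHessenberg (Fᴴ * F)) {i j : Fin n} (hij : (i : ℕ) + 1 = j) :
    ‖Fᴴ * F * tailProj 𝕜 n j‖ ^ 2 ≤ (‖F * tailProj 𝕜 n j‖ ^ 2) ^ 2 + ‖(Fᴴ * F) i j‖ ^ 2 := by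
  have h := norm_sq_le_of_isStarProjection (isStarProjection_tailProj (j : ℕ))
    (Fᴴ * F * tailProj 𝕜 n j)
  rwa [hT.one_sub_tailProj_mul_mul_tailProj hij, l2_opNorm_single, ← Matrix.mul_assoc,
    tailProj_mul_gram_mul_tailProj, l2_opNorm_conjTranspose_mul_self, ← pow_two] at h

theorem exists_l2_opNorm_gram_mul_tailProj_bounds {F : Matrix ι (Fin n) 𝕜}
    (hT : IsUnreducedLowerHessenberg (Fᴴ * F)) {i j : Fin n} (hij : (i : ℕ) + 1 = j) :
    ∃ μ : ℝ, 0 < μ ∧ μ < 1 ∧ ‖F * tailProj 𝕜 n j‖ ^ 2 < ‖Fᴴ * F * tailProj 𝕜 n j‖ ∧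
      ‖Fᴴ * F * tailProj 𝕜 n j‖ ≤
        √(1 + μ * (‖F * tailProj 𝕜 n i‖ / ‖F * tailProj 𝕜 n j‖) ^ 2) *
          ‖F * tailProj 𝕜 n j‖ ^ 2 := by
  have t_pos : 0 < ‖(Fᴴ * F) i j‖ := norm_pos_iff.mpr (hT.superdiag_ne_zero hij)
  have t_lt := norm_gram_apply_lt (Fin.lt_def.mpr (by omega)) (hT.superdiag_ne_zero hij)
  have lower := l2_opNorm_compression_lt (isHermitian_conjTranspose_mul_self F) hT hij
  rw [tailProj_mul_gram_mul_tailProj, l2_opNorm_conjTranspose_mul_self, ← pow_two] at lower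
  have upper := sq_l2_opNorm_gram_mul_tailProj_le hT.isLowerHessenberg hij
  set t := ‖(Fᴴ * F) i j‖
  set d := ‖F * tailProj 𝕜 n i‖
  set c := ‖F * tailProj 𝕜 n j‖
  have dc_pos : 0 < d * c := t_pos.trans t_lt
  have c_ne_zero : c ≠ 0 := right_ne_zero_of_mul dc_pos.ne'
  have d_ne_zero : d ≠ 0 := left_ne_zero_of_mul dc_pos.ne'
  refine ⟨(t / (d * c)) ^ 2, pow_pos (div_pos t_pos dc_pos) 2, ?_, lower, ?_⟩
  · exact pow_lt_one₀ (div_nonneg t_pos.le dc_pos.le) ((div_lt_one dc_pos).mpr t_lt) two_ne_zero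
  · rw [← Real.sqrt_sq (sq_nonneg c), ← Real.sqrt_mul' _ (sq_nonneg _)]
    refine Real.le_sqrt_of_sq_le (upper.trans_eq ?_)
    field_simp

end TailBounds

section GolubKahan

variable {m n : ℕ}

theorem specNorm_eq_l2_opNorm (M : Matrix (Fin m) (Fin n) ℝ) : specNorm M = ‖M‖ := by
  rw [l2_opNorm_def]
  rfl

theorem specNorm_mul_transpose {Q : Matrix (Fin n) (Fin n) ℝ} (hQ : Qᵀ * Q = 1)
    (M : Matrix (Fin m) (Fin n) ℝ) : specNorm (M * Qᵀ) = ‖M‖ := by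
  rw [specNorm_eq_l2_opNorm, ← conjTranspose_eq_transpose_of_trivial,
    l2_opNorm_mul_conjTranspose_of_conjTranspose_mul_self_eq_one]
  rwa [conjTranspose_eq_transpose_of_trivial]

theorem specNorm_mul_one_sub_colSub {Q : Matrix (Fin n) (Fin n) ℝ} (hQ : Qᵀ * Q = 1)
    (A : Matrix (Fin m) (Fin n) ℝ) (k : ℕ) (hk : k ≤ n) :
    specNorm (A * (1 - colSub Q k hk * (colSub Q k hk)ᵀ)) = ‖A * Q * tailProj ℝ n k‖ := by
  have compl : 1 - Q * (1 - tailProj ℝ n k) * Qᵀ = Q * tailProj ℝ n k * Qᵀ := by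
    rw [Matrix.mul_sub, Matrix.sub_mul, Matrix.mul_one, mul_eq_one_comm.mp hQ, sub_sub_cancel]
  rw [colSub_mul_transpose, compl, ← specNorm_mul_transpose hQ]
  simp only [Matrix.mul_assoc]

theorem specNorm_gram_sub_colSub {Q : Matrix (Fin n) (Fin n) ℝ} (hQ : Qᵀ * Q = 1)
    {A : Matrix (Fin m) (Fin n) ℝ} (hT : IsLowerHessenberg ((A * Q)ᵀ * (A * Q)))
    (k : ℕ) (hk : k + 1 ≤ n) :
    specNorm (Aᵀ * A - colSub Q (k + 1) hk * (colSub Q (k + 1) hk)ᵀ * (Aᵀ * A) *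
      (colSub Q k (by omega) * (colSub Q k (by omega))ᵀ)) =
      ‖(A * Q)ᵀ * (A * Q) * tailProj ℝ n k‖ := by
  set T := (A * Q)ᵀ * (A * Q) with hT_def
  have gram_eq : Aᵀ * A = Q * T * Qᵀ := by
    have hQ' : Q * Qᵀ = 1 := mul_eq_one_comm.mp hQ
    rw [hT_def, transpose_mul]
    simp only [Matrix.mul_assoc, hQ', Matrix.mul_one]
    rw [← Matrix.mul_assoc, hQ', Matrix.one_mul]
  have tail_head : tailProj ℝ n (k + 1) * (T * (1 - tailProj ℝ n k)) = 0 := by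
    have star_T : star T = T := isHermitian_conjTranspose_mul_self (A * Q)
    have h := congrArg star (hT.one_sub_tailProj_mul_mul_tailProj_succ k)
    rwa [star_mul, star_mul, star_T, (isStarProjection_tailProj _).isSelfAdjoint.star_eq,
      (isStarProjection_tailProj _).one_sub.isSelfAdjoint.star_eq, star_zero, mul_assoc] at h
  have conj_eq : Q * T * Qᵀ - Q * (1 - tailProj ℝ n (k + 1)) * Qᵀ * (Q * T * Qᵀ) *
      (Q * (1 - tailProj ℝ n k) * Qᵀ) = Q * (T * tailProj ℝ n k) * Qᵀ := by
    calc _ = Q * T * Qᵀ - Q * (1 - tailProj ℝ n (k + 1)) * (Qᵀ * Q) * T * (Qᵀ * Q) *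
          (1 - tailProj ℝ n k) * Qᵀ := by noncomm_ring
      _ = Q * (T * tailProj ℝ n k +
          tailProj ℝ n (k + 1) * (T * (1 - tailProj ℝ n k))) * Qᵀ := by rw [hQ]; noncomm_ring
      _ = Q * (T * tailProj ℝ n k) * Qᵀ := by rw [tail_head, add_zero]
  rw [colSub_mul_transpose, colSub_mul_transpose, gram_eq, conj_eq, specNorm_mul_transpose hQ,
    l2_opNorm_mul_of_conjTranspose_mul_self_eq_one]
  rwa [conjTranspose_eq_transpose_of_trivial]

theorem isUnreducedLowerHessenberg_gram_of_bidiagonalization {A : Matrix (Fin m) (Fin n) ℝ}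
    {P : Matrix (Fin m) (Fin (n + 1)) ℝ} (hP : Pᵀ * P = 1)
    {Q : Matrix (Fin n) (Fin n) ℝ} (hQ : Qᵀ * Q = 1) {α β : Fin n → ℝ} (hα : ∀ i, α i ≠ 0)
    (hβ : ∀ i, β i ≠ 0) (hA : A = P * lowerBidiagonal α β * Qᵀ) :
    IsUnreducedLowerHessenberg ((A * Q)ᵀ * (A * Q)) := by
  have mul_Q : A * Q = P * lowerBidiagonal α β := by
    rw [hA, Matrix.mul_assoc, hQ, Matrix.mul_one]
  rw [mul_Q, transpose_mul, Matrix.mul_assoc, ← Matrix.mul_assoc Pᵀ, hP, Matrix.one_mul]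
  exact isUnreducedLowerHessenberg_gram_lowerBidiagonal hα hβ

theorem lsmr_rank_k_approx_error_bounds_general
    {Q : Matrix (Fin n) (Fin n) ℝ} (hQ : Qᵀ * Q = 1) {A : Matrix (Fin m) (Fin n) ℝ}
    (hT : IsUnreducedLowerHessenberg ((A * Q)ᵀ * (A * Q))) {k : ℕ} (hk1 : 1 ≤ k) (hk2 : k < n) :
    ∃ mk : ℝ, 0 < mk ∧ mk < 1 ∧
      specNorm (A * (1 - colSub Q k (by omega) * (colSub Q k (by omega))ᵀ)) ^ 2 <
        specNorm (Aᵀ * A -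
          colSub Q (k + 1) (by omega) * (colSub Q (k + 1) (by omega))ᵀ * (Aᵀ * A) *
            (colSub Q k (by omega) * (colSub Q k (by omega))ᵀ)) ∧
      specNorm (Aᵀ * A -
          colSub Q (k + 1) (by omega) * (colSub Q (k + 1) (by omega))ᵀ * (Aᵀ * A) *
            (colSub Q k (by omega) * (colSub Q k (by omega))ᵀ)) ≤
        Real.sqrt (1 + mk *
            (specNorm (A * (1 - colSub Q (k - 1) (by omega) * (colSub Q (k - 1) (by omega))ᵀ)) /
              specNorm (A * (1 - colSub Q k (by omega) * (colSub Q k (by omega))ᵀ))) ^ 2) *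
          specNorm (A * (1 - colSub Q k (by omega) * (colSub Q k (by omega))ᵀ)) ^ 2 := by
  simp only [specNorm_mul_one_sub_colSub hQ, specNorm_gram_sub_colSub hQ hT.isLowerHessenberg k hk2]
  exact exists_l2_opNorm_gram_mul_tailProj_bounds (i := ⟨k - 1, by omega⟩) (j := ⟨k, hk2⟩)
    hT (Nat.sub_add_cancel hk1)

end GolubKahan

/-- there exists `0 < m_k < 1` with `(γ_k^{lsqr})² <
‖AᵀA - Q_{k+1}Q_{k+1}ᵀ(AᵀA)Q_kQ_kᵀ‖ ≤ √(1 + m_k (γ_{k-1}^{lsqr}/γ_k^{lsqr})²)(γ_k^{lsqr})²`. -/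
theorem lsmr_rank_k_approx_error_bounds
    (m n : ℕ) (hn : 2 ≤ n) (hmn : n < m)
    (A : Matrix (Fin m) (Fin n) ℝ)
    (P : Matrix (Fin m) (Fin (n + 1)) ℝ) (hP : Pᵀ * P = 1)
    (Q : Matrix (Fin n) (Fin n) ℝ) (hQ : Qᵀ * Q = 1)
    (α : Fin n → ℝ) (hα : ∀ i, 0 < α i)
    (β : Fin n → ℝ) (hβ : ∀ i, 0 < β i)
    (B : Matrix (Fin (n + 1)) (Fin n) ℝ)
    (hB : ∀ (i : Fin (n + 1)) (j : Fin n),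
      B i j = if (i : ℕ) = (j : ℕ) then α j
        else if (i : ℕ) = (j : ℕ) + 1 then β j else 0)
    (hA : A = P * B * Qᵀ)
    (σ : Fin n → ℝ) (hσpos : ∀ i, 0 < σ i)
    (hσstrict : ∀ i j : Fin n, i < j → σ j < σ i)
    (hσ : ∀ i : Fin n, σ i = singVal A ((i : ℕ) + 1))
    (k : ℕ) (hk1 : 1 ≤ k) (hk2 : k ≤ n - 1) :
    ∃ mk : ℝ, 0 < mk ∧ mk < 1 ∧
      specNorm (A * (1 - colSub Q k (by omega) * (colSub Q k (by omega))ᵀ)) ^ 2 <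
        specNorm (Aᵀ * A -
          colSub Q (k + 1) (by omega) * (colSub Q (k + 1) (by omega))ᵀ * (Aᵀ * A) *
            (colSub Q k (by omega) * (colSub Q k (by omega))ᵀ)) ∧
      specNorm (Aᵀ * A -
          colSub Q (k + 1) (by omega) * (colSub Q (k + 1) (by omega))ᵀ * (Aᵀ * A) *
            (colSub Q k (by omega) * (colSub Q k (by omega))ᵀ)) ≤
        Real.sqrt (1 + mk *
            (specNorm (A * (1 - colSub Q (k - 1) (by omega) * (colSub Q (k - 1) (by omega))ᵀ)) /
              specNorm (A * (1 - colSub Q k (by omega) * (colSub Q k (by omega))ᵀ))) ^ 2) *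
          specNorm (A * (1 - colSub Q k (by omega) * (colSub Q k (by omega))ᵀ)) ^ 2 := by
  have hB' : B = lowerBidiagonal α β := Matrix.ext hB
  have hT := isUnreducedLowerHessenberg_gram_of_bidiagonalization hP hQ
    (fun i => (hα i).ne') (fun i => (hβ i).ne') (hB' ▸ hA)
  exact lsmr_rank_k_approx_error_bounds_general hQ hT hk1 (by omega)
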